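/- Let q ∈ L¹[0,1] be a real-valued integrable function and let t ∈ [0,2π) be fixed. Suppose that every eigenvalue λ of the quasi-periodic problem L_t(q) satisfies λ ≥ min{t², (2π−t)²}, and that for every n ∈ ℕ (n ≥ 1) the number (2nπ − t)² is an eigenvalue of L_t(q). Then q = 0 almost everywhere on [0,1]. -/

import Mathlib

open MeasureTheory Set

/-- `IsQPEigenpair q t lam y g h` says that `y` (with first derivative `g` and
second derivative `h`) is an eigenfunction of the quasi-periodic problem
`L_t(q)` on `[0,1]` with eigenvalue `lam`: `y` is nonzero, continuously
differentiable on `[0,1]` with derivative `g`, `g` is absolutely continuous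
with a.e. derivative `h` (encoded via the fundamental theorem of calculus with
`h` integrable), the equation `-y'' + q y = lam y` holds a.e. on `[0,1]`, and
the quasi-periodic boundary conditions hold. -/
def IsQPEigenpair (q : ℝ → ℝ) (t : ℝ) (lam : ℂ) (y g h : ℝ → ℂ) : Prop :=
  (∃ x ∈ Icc (0:ℝ) 1, y x ≠ 0) ∧
  (∀ x ∈ Icc (0:ℝ) 1, HasDerivWithinAt y (g x) (Icc (0:ℝ) 1) x) ∧
  ContinuousOn g (Icc (0:ℝ) 1) ∧
  IntegrableOn h (Icc (0:ℝ) 1) ∧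
  (∀ x ∈ Icc (0:ℝ) 1, g x = g 0 + ∫ s in (0:ℝ)..x, h s) ∧
  (∀ᵐ x ∂(volume.restrict (Icc (0:ℝ) 1)), -h x + (q x : ℂ) * y x = lam * y x) ∧
  y 1 = Complex.exp (Complex.I * t) * y 0 ∧
  g 1 = Complex.exp (Complex.I * t) * g 0

/-- `lam` is an eigenvalue of the quasi-periodic problem `L_t(q)`. -/
def IsQPEigenvalue (q : ℝ → ℝ) (t : ℝ) (lam : ℂ) : Prop :=
  ∃ y g h : ℝ → ℂ, IsQPEigenpair q t lam y g h

open scoped ComplexConjugate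

/-- Lebesgue measure on the unit interval. -/
noncomputable abbrev unitMeasure : Measure ℝ := volume.restrict (Icc (0:ℝ) 1)

/-- The primitive of `f` on `[0,1]` that vanishes at `0`. -/
noncomputable def prim (f : ℝ → ℂ) (x : ℝ) : ℂ := ∫ s in Iic x, f s ∂unitMeasure

theorem prim_zero (f : ℝ → ℂ) : prim f 0 = 0 := by
  have : unitMeasure (Iic (0:ℝ)) = 0 := by
    rw [Measure.restrict_apply measurableSet_Iic]
    refine measure_mono_null (t := {0}) ?_ (by simp)
    rintro x ⟨h1, h2, -⟩
    exact le_antisymm h1 h2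
  rw [prim, Measure.restrict_eq_zero.mpr this, integral_zero_measure]

theorem prim_one (f : ℝ → ℂ) : prim f 1 = ∫ s, f s ∂unitMeasure := by
  have : Iic (1:ℝ) ∩ Icc 0 1 = Icc 0 1 := inter_eq_right.mpr Icc_subset_Iic_self
  rw [prim, Measure.restrict_restrict measurableSet_Iic, this]

theorem prim_eq_intervalIntegral (f : ℝ → ℂ) {x : ℝ} (hx : x ∈ Icc (0:ℝ) 1) :
    prim f x = ∫ s in (0:ℝ)..x, f s := by
  have : Iic x ∩ Icc (0:ℝ) 1 = Icc 0 x := by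
    ext s
    simp only [mem_inter_iff, mem_Iic, mem_Icc]
    constructor
    · rintro ⟨h1, h2, -⟩; exact ⟨h2, h1⟩
    · rintro ⟨h1, h2⟩; exact ⟨h2, h1, h2.trans hx.2⟩
  rw [prim, Measure.restrict_restrict measurableSet_Iic, this, integral_Icc_eq_integral_Ioc,
    intervalIntegral.integral_of_le hx.1]

theorem continuous_prim {f : ℝ → ℂ} (hf : Integrable f unitMeasure) : Continuous (prim f) := by
  have h : prim f = fun x => prim f 0 + ∫ s in (0:ℝ)..x, f s ∂unitMeasure := by
    ext x
    rw [← intervalIntegral.integral_Iic_sub_Iic hf.integrableOn hf.integrableOn]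
    simp [prim]
  rw [h]
  exact continuous_const.add (intervalIntegral.continuous_primitive
    (fun a b => hf.intervalIntegrable) 0)

theorem prim_congr_ae {f g : ℝ → ℂ} (h : f =ᵐ[unitMeasure] g) : prim f = prim g := by
  ext x
  exact integral_congr_ae (ae_restrict_of_ae h)

theorem norm_prim_le {f : ℝ → ℂ} (hf : Integrable f unitMeasure) (x : ℝ) :
    ‖prim f x‖ ≤ ∫ s, ‖f s‖ ∂unitMeasure :=
  (norm_integral_le_integral_norm _).trans
    (setIntegral_le_integral hf.norm (Filter.Eventually.of_forall fun _ => norm_nonneg _))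

theorem prim_add {f g : ℝ → ℂ} (hf : Integrable f unitMeasure) (hg : Integrable g unitMeasure)
    (x : ℝ) : prim (fun s => f s + g s) x = prim f x + prim g x :=
  integral_add hf.integrableOn hg.integrableOn

theorem prim_const_mul (c : ℂ) (f : ℝ → ℂ) (x : ℝ) :
    prim (fun s => c * f s) x = c * prim f x :=
  integral_const_mul _ _

theorem MeasureTheory.Integrable.mul_continuous_unit {f g : ℝ → ℂ}
    (hf : Integrable f unitMeasure) (hg : Continuous g) :
    Integrable (fun x => f x * g x) unitMeasure := by
  have : IntegrableOn (fun x => f x * g x) (Icc 0 1) volume :=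
    IntegrableOn.mul_continuousOn hf hg.continuousOn isCompact_Icc
  exact this

/-- Integration by parts for the primitives `∫_{s ≤ x} f` and `∫_{s ≤ x} g`. -/
theorem integral_mul_primitive_add {ν : Measure ℝ} [SFinite ν] [NullSingletonClass ν] {f g : ℝ → ℂ}
    (hf : Integrable f ν) (hg : Integrable g ν) :
    (∫ x, f x * ∫ s in Iic x, g s ∂ν ∂ν) + (∫ x, g x * ∫ s in Iic x, f s ∂ν ∂ν)
      = (∫ x, f x ∂ν) * ∫ x, g x ∂ν := by
  have hS : MeasurableSet {p : ℝ × ℝ | p.2 ≤ p.1} := measurableSet_le measurable_snd measurable_fst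
  have hT : MeasurableSet {p : ℝ × ℝ | p.1 ≤ p.2} := measurableSet_le measurable_fst measurable_snd
  have hfg : Integrable (fun p : ℝ × ℝ => f p.1 * g p.2) (ν.prod ν) := hf.mul_prod hg
  have h1 : (∫ x, f x * ∫ s in Iic x, g s ∂ν ∂ν)
      = ∫ x, ∫ s, {p : ℝ × ℝ | p.2 ≤ p.1}.indicator (fun p => f p.1 * g p.2) (x, s) ∂ν ∂ν := by
    congr 1 with x
    rw [← integral_const_mul, ← integral_indicator measurableSet_Iic]
    rfl
  have h2 : (∫ x, g x * ∫ s in Iic x, f s ∂ν ∂ν)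
      = ∫ x, ∫ s, {p : ℝ × ℝ | p.1 ≤ p.2}.indicator (fun p => f p.1 * g p.2) (x, s) ∂ν ∂ν := by
    rw [integral_integral_swap (f := fun x s =>
      {p : ℝ × ℝ | p.1 ≤ p.2}.indicator (fun p => f p.1 * g p.2) (x, s)) (hfg.indicator hT)]
    congr 1 with x
    rw [← integral_const_mul, ← integral_indicator measurableSet_Iic]
    congr 1 with s
    simp only [indicator, mem_Iic, mem_ofPred_eq, mul_comm]
  have h3 : (∫ x, f x ∂ν) * ∫ x, g x ∂ν = ∫ x, ∫ s, f x * g s ∂ν ∂ν := by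
    simp_rw [integral_const_mul, integral_mul_const]
  rw [h1, h2, h3, ← integral_add (hfg.indicator hS).integral_prod_left
    (hfg.indicator hT).integral_prod_left]
  refine integral_congr_ae ?_
  filter_upwards [(hfg.indicator hS).prod_right_ae, (hfg.indicator hT).prod_right_ae] with x hx hx'
  rw [← integral_add hx hx']
  refine integral_congr_ae ?_
  have : ∀ᵐ s ∂ν, s ≠ x := by simp [ae_iff]
  filter_upwards [this] with s hs
  rcases lt_or_gt_of_ne hs with h | h
  · simp [indicator, h.le, not_le.mpr h]
  · simp [indicator, h.le, not_le.mpr h]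

/-- The product of two primitives is the primitive of the expected function. -/
theorem prim_mul_prim {f g : ℝ → ℂ} (hf : Integrable f unitMeasure)
    (hg : Integrable g unitMeasure) (x : ℝ) :
    prim f x * prim g x = prim (fun s => f s * prim g s) x + prim (fun s => g s * prim f s) x := by
  have h := integral_mul_primitive_add (ν := unitMeasure.restrict (Iic x)) (f := f) (g := g)
    hf.integrableOn hg.integrableOn
  have key : ∀ f g : ℝ → ℂ, (∫ s in Iic x, f s * ∫ r in Iic s, g r
      ∂(unitMeasure.restrict (Iic x)) ∂unitMeasure) = prim (fun s => f s * prim g s) x := by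
    intro f g
    refine setIntegral_congr_fun measurableSet_Iic fun s hs => ?_
    simp only [prim]
    rw [Measure.restrict_restrict measurableSet_Iic, Iic_inter_Iic, min_eq_left hs]
  rw [key, key] at h
  exact h.symm

/-- Square-integrable complex functions on the unit interval. -/
noncomputable abbrev UnitL2 : Type := Lp ℂ 2 unitMeasure

/-- The indicator of `(-∞, x]` as a square-integrable function. -/
noncomputable def stepL2 (x : ℝ) : UnitL2 :=
  indicatorConstLp 2 (measurableSet_Iic (a := x)) (measure_ne_top unitMeasure _) 1

/-- The linear functional sending `(a, v)` to the value at `x` of the function with initial value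
`a` and derivative `v`. -/
noncomputable def traj (x : ℝ) : ℂ × UnitL2 →L[ℂ] ℂ :=
  ContinuousLinearMap.fst ℂ ℂ UnitL2 +
    (innerSL ℂ (stepL2 x)).comp (ContinuousLinearMap.snd ℂ ℂ UnitL2)

theorem integrable_of_unitL2 (v : UnitL2) : Integrable v unitMeasure :=
  (Lp.memLp v).integrable one_le_two

theorem traj_apply (x : ℝ) (u : ℂ × UnitL2) : traj x u = u.1 + prim u.2 x := by
  simp only [traj, add_apply, ContinuousLinearMap.comp_apply,
    ContinuousLinearMap.coe_fst', ContinuousLinearMap.coe_snd', innerSL_apply_apply]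
  rw [stepL2, L2.inner_indicatorConstLp_one]
  rfl

theorem traj_zero (u : ℂ × UnitL2) : traj 0 u = u.1 := by
  rw [traj_apply, prim_zero, add_zero]

theorem continuous_traj (u : ℂ × UnitL2) : Continuous fun x => traj x u := by
  simp_rw [traj_apply]
  exact continuous_const.add (continuous_prim (integrable_of_unitL2 _))

theorem norm_traj_sub_traj_le {x z : ℝ} (hzx : z ≤ x) (u : ℂ × UnitL2) :
    ‖traj x u - traj z u‖ ≤ √(x - z) * ‖u.2‖ := by
  have hv := integrable_of_unitL2 u.2
  have h1 : traj x u - traj z u = ∫ s in Ioc z x, u.2 s ∂unitMeasure := by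
    rw [traj_apply, traj_apply, add_sub_add_left_eq_sub, prim, prim,
      intervalIntegral.integral_Iic_sub_Iic hv.integrableOn hv.integrableOn,
      intervalIntegral.integral_of_le hzx]
  rw [h1, ← L2.inner_indicatorConstLp_one measurableSet_Ioc (measure_ne_top unitMeasure _) u.2]
  refine (norm_inner_le_norm _ _).trans ?_
  gcongr
  rw [norm_indicatorConstLp (by norm_num) (by norm_num)]
  simp only [norm_one, one_mul, ENNReal.toReal_ofNat, ← Real.sqrt_eq_rpow]
  apply Real.sqrt_le_sqrt
  calc unitMeasure.real (Ioc z x) ≤ volume.real (Ioc z x) := by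
        refine ENNReal.toReal_mono (by simp) (Measure.restrict_apply_le _ _)
    _ = x - z := by simp [hzx]

theorem norm_traj_le {x : ℝ} (hx : x ∈ Icc (0:ℝ) 1) (u : ℂ × UnitL2) :
    ‖traj x u‖ ≤ ‖u.1‖ + ‖u.2‖ := by
  have h := norm_traj_sub_traj_le hx.1 u
  rw [traj_zero, sub_zero] at h
  have h1 : √x * ‖u.2‖ ≤ ‖u.2‖ :=
    mul_le_of_le_one_left (norm_nonneg _) (Real.sqrt_le_one.mpr hx.2)
  calc ‖traj x u‖ = ‖u.1 + (traj x u - u.1)‖ := by rw [add_sub_cancel]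
    _ ≤ _ := (norm_add_le _ _).trans (by linarith)

/-- The weighted quadratic form `∫ w |y|²`. -/
noncomputable def quad (w : ℝ → ℝ) (u : ℂ × UnitL2) : ℝ :=
  ∫ x, w x * ‖traj x u‖ ^ 2 ∂unitMeasure

theorem MeasureTheory.Integrable.mul_continuous_unit_real {f g : ℝ → ℝ}
    (hf : Integrable f unitMeasure) (hg : Continuous g) :
    Integrable (fun x => f x * g x) unitMeasure := by
  have : IntegrableOn (fun x => f x * g x) (Icc 0 1) volume :=
    IntegrableOn.mul_continuousOn hf hg.continuousOn isCompact_Icc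
  exact this

theorem integrable_quad {w : ℝ → ℝ} (hw : Integrable w unitMeasure) (u : ℂ × UnitL2) :
    Integrable (fun x => w x * ‖traj x u‖ ^ 2) unitMeasure :=
  hw.mul_continuous_unit_real ((continuous_traj u).norm.pow 2)

theorem abs_quad_le {w : ℝ → ℝ} (hw : Integrable w unitMeasure) {u : ℂ × UnitL2} {C : ℝ}
    (hC : ∀ x ∈ Icc (0:ℝ) 1, ‖traj x u‖ ^ 2 ≤ C) :
    |quad w u| ≤ (∫ x, |w x| ∂unitMeasure) * C := by
  rw [← integral_mul_const, ← Real.norm_eq_abs]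
  refine norm_integral_le_of_norm_le (hw.abs.mul_const C) ?_
  filter_upwards [ae_restrict_mem measurableSet_Icc] with x hx
  rw [norm_mul, Real.norm_eq_abs, norm_pow, norm_norm]
  exact mul_le_mul_of_nonneg_left (hC x hx) (abs_nonneg _)

theorem quad_smul (w : ℝ → ℝ) (c : ℂ) (u : ℂ × UnitL2) :
    quad w (c • u) = ‖c‖ ^ 2 * quad w u := by
  rw [quad, quad, ← integral_const_mul]
  congr 1 with x
  rw [map_smul, norm_smul]
  ring

theorem continuous_quad {w : ℝ → ℝ} (hw : Integrable w unitMeasure) : Continuous (quad w) := by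
  refine continuous_iff_continuousAt.mpr fun u => ?_
  refine continuousAt_of_dominated (bound := fun x => |w x| * (2 * (‖u‖ + 1)) ^ 2)
    (Filter.Eventually.of_forall fun z => (integrable_quad hw z).aestronglyMeasurable) ?_
    (hw.abs.mul_const _) ?_
  · have : ∀ᶠ z in nhds u, ‖z‖ < ‖u‖ + 1 :=
      continuous_norm.continuousAt.eventually_lt continuousAt_const (by simp)
    filter_upwards [this] with z hz
    filter_upwards [ae_restrict_mem measurableSet_Icc] with x hx
    rw [norm_mul, Real.norm_eq_abs, norm_pow, norm_norm]
    have h1 := norm_traj_le hx z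
    have h2 := norm_fst_le z
    have h3 := norm_snd_le z
    gcongr
    linarith
  · refine Filter.Eventually.of_forall fun x => ?_
    exact continuousAt_const.mul (((traj x).continuous.norm.pow 2).continuousAt)

/-- The energy form `∫ |y'|² + ∫ w |y|²`. -/
noncomputable def energy (w : ℝ → ℝ) (u : ℂ × UnitL2) : ℝ := ‖u.2‖ ^ 2 + quad w u

/-- The real part of the sesquilinear form associated with `energy w`. -/
noncomputable def energyPolar (w : ℝ → ℝ) (u z : ℂ × UnitL2) : ℝ :=
  (inner ℂ z.2 u.2).re + ∫ x, w x * (traj x u * conj (traj x z)).re ∂unitMeasure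

theorem quad_add_smul {w : ℝ → ℝ} (hw : Integrable w unitMeasure) (u z : ℂ × UnitL2) (ε : ℝ) :
    quad w (u + (ε : ℂ) • z) = quad w u
      + 2 * ε * ∫ x, w x * (traj x u * conj (traj x z)).re ∂unitMeasure
      + ε ^ 2 * quad w z := by
  have h2 : Integrable (fun x => w x * (traj x u * conj (traj x z)).re) unitMeasure :=
    hw.mul_continuous_unit_real (Complex.continuous_re.comp
      ((continuous_traj u).mul (Complex.continuous_conj.comp (continuous_traj z))))
  have h3 : Integrable (fun x => w x * ‖traj x u‖ ^ 2
      + 2 * ε * (w x * (traj x u * conj (traj x z)).re)) unitMeasure :=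
    (integrable_quad hw u).add (h2.const_mul _)
  rw [quad, quad, quad, ← integral_const_mul, ← integral_const_mul,
    ← integral_add (integrable_quad hw u) (h2.const_mul _),
    ← integral_add h3 ((integrable_quad hw z).const_mul _)]
  congr 1 with x
  rw [map_add, map_smul, ← Complex.normSq_eq_norm_sq, ← Complex.normSq_eq_norm_sq,
    ← Complex.normSq_eq_norm_sq, Complex.normSq_add]
  simp [Complex.normSq_apply]
  ring

theorem energy_add_smul {w : ℝ → ℝ} (hw : Integrable w unitMeasure) (u z : ℂ × UnitL2) (ε : ℝ) :
    energy w (u + (ε : ℂ) • z) = energy w u + 2 * ε * energyPolar w u z + ε ^ 2 * energy w z := by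
  have h : ‖u.2 + (ε : ℂ) • z.2‖ ^ 2
      = ‖u.2‖ ^ 2 + 2 * ε * (inner ℂ z.2 u.2).re + ε ^ 2 * ‖z.2‖ ^ 2 := by
    rw [@norm_add_sq ℂ, norm_smul, inner_smul_right, ← inner_conj_symm]
    simp only [RCLike.mul_re, RCLike.re_to_complex, RCLike.im_to_complex, Complex.ofReal_re,
      Complex.ofReal_im, Complex.conj_re, Complex.norm_real, Real.norm_eq_abs, mul_pow, sq_abs]
    ring
  rw [energy, quad_add_smul hw, Prod.snd_add, Prod.smul_snd, h, energy, energy, energyPolar]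
  ring

theorem quad_parallelogram {w : ℝ → ℝ} (hw : Integrable w unitMeasure) (u z : ℂ × UnitL2) :
    quad w (u + z) + quad w (u - z) = 2 * quad w u + 2 * quad w z := by
  have h1 := quad_add_smul hw u z 1
  have h2 := quad_add_smul hw u z (-1)
  simp only [Complex.ofReal_one, one_smul, Complex.ofReal_neg, neg_smul, ← sub_eq_add_neg]
    at h1 h2
  rw [h1, h2]
  ring

theorem energy_parallelogram {w : ℝ → ℝ} (hw : Integrable w unitMeasure) (u z : ℂ × UnitL2) :
    energy w (u + z) + energy w (u - z) = 2 * energy w u + 2 * energy w z := by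
  have h1 := quad_parallelogram hw u z
  have h2 := parallelogram_law_with_norm ℂ u.2 z.2
  simp only [energy, Prod.snd_add, Prod.snd_sub]
  linarith

theorem continuous_energy {w : ℝ → ℝ} (hw : Integrable w unitMeasure) : Continuous (energy w) :=
  (continuous_snd.norm.pow 2).add (continuous_quad hw)

theorem energy_smul (w : ℝ → ℝ) (c : ℂ) (u : ℂ × UnitL2) :
    energy w (c • u) = ‖c‖ ^ 2 * energy w u := by
  rw [energy, energy, quad_smul, Prod.smul_snd, norm_smul]
  ring

theorem quad_one_nonneg (u : ℂ × UnitL2) : 0 ≤ quad 1 u :=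
  integral_nonneg fun x => by simp only [Pi.one_apply, one_mul, Pi.zero_apply]; positivity

theorem norm_traj_sq_le {δ : ℝ} (hδ : 0 < δ) (hδ1 : δ ≤ 1) {x : ℝ} (hx : x ∈ Icc (0:ℝ) 1)
    (u : ℂ × UnitL2) : ‖traj x u‖ ^ 2 ≤ 2 / δ * quad 1 u + 2 * δ * ‖u.2‖ ^ 2 := by
  set a := x * (1 - δ) with ha
  have ha0 : 0 ≤ a := mul_nonneg hx.1 (by linarith)
  have hax : a ≤ x := by nlinarith [hx.1]
  have hxa : x ≤ a + δ := by nlinarith [hx.2]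
  have ha1 : a + δ ≤ 1 := by nlinarith [hx.2]
  have hint := integrable_quad (integrable_const (1:ℝ)) u
  have hsub : Icc a (a + δ) ⊆ Icc 0 1 := Icc_subset_Icc ha0 ha1
  have hpt : ∀ s ∈ Icc a (a + δ),
      ‖traj x u‖ ^ 2 ≤ 2 * (1 * ‖traj s u‖ ^ 2) + 2 * δ * ‖u.2‖ ^ 2 := by
    intro s hs
    have h1 : ‖traj x u - traj s u‖ ≤ √δ * ‖u.2‖ := by
      rcases le_total s x with h | h
      · refine (norm_traj_sub_traj_le h u).trans ?_
        gcongr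
        linarith [hs.1]
      · rw [norm_sub_rev]
        refine (norm_traj_sub_traj_le h u).trans ?_
        gcongr
        linarith [hs.2]
    have h2 : ‖traj x u‖ ≤ ‖traj s u‖ + √δ * ‖u.2‖ := by
      have := norm_sub_norm_le (traj x u) (traj s u)
      linarith
    have h3 : (√δ * ‖u.2‖) ^ 2 = δ * ‖u.2‖ ^ 2 := by rw [mul_pow, Real.sq_sqrt hδ.le]
    nlinarith [norm_nonneg (traj x u), sq_nonneg (‖traj s u‖ - √δ * ‖u.2‖)]
  have hmono : ∫ s in Icc a (a + δ), ‖traj x u‖ ^ 2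
      ≤ ∫ s in Icc a (a + δ), (2 * (1 * ‖traj s u‖ ^ 2) + 2 * δ * ‖u.2‖ ^ 2) :=
    setIntegral_mono_on (integrable_const _)
      (((hint.mono_measure (Measure.restrict_mono_set _ hsub)).const_mul 2).add
        (integrable_const _))
      measurableSet_Icc hpt
  have hle : ∫ s in Icc a (a + δ), 1 * ‖traj s u‖ ^ 2 ≤ quad 1 u :=
    setIntegral_mono_set hint (Filter.Eventually.of_forall fun s => by positivity)
      hsub.eventuallyLE
  rw [integral_add ((hint.mono_measure (Measure.restrict_mono_set _ hsub)).const_mul 2)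
    (integrable_const _),
    integral_const_mul] at hmono
  simp only [integral_const, measureReal_restrict_apply_univ, Real.volume_real_Icc,
    add_sub_cancel_left, max_eq_left hδ.le, smul_eq_mul] at hmono
  have : δ * ‖traj x u‖ ^ 2 ≤ δ * (2 / δ * quad 1 u + 2 * δ * ‖u.2‖ ^ 2) := by
    have : δ * (2 / δ * quad 1 u + 2 * δ * ‖u.2‖ ^ 2)
        = 2 * quad 1 u + δ * (2 * δ * ‖u.2‖ ^ 2) := by field_simp
    rw [this]
    linarith
  exact le_of_mul_le_mul_left this hδ

/-- The energy form is bounded below and coercive relative to the `L²` norm. -/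
theorem exists_energy_lower_bound {w : ℝ → ℝ} (hw : Integrable w unitMeasure) :
    ∃ C : ℝ, ∀ u, ‖u.2‖ ^ 2 / 2 - C * quad 1 u ≤ energy w u := by
  set W := ∫ x, |w x| ∂unitMeasure with hW
  have hW0 : 0 ≤ W := integral_nonneg fun x => abs_nonneg _
  set δ := 1 / (4 * (W + 1)) with hδ
  have hδ0 : 0 < δ := by positivity
  have hδ1 : δ ≤ 1 := by rw [hδ, div_le_one (by positivity)]; linarith
  have hWδ : W * δ ≤ 1 / 4 := by
    rw [hδ, mul_one_div, div_le_div_iff₀ (by positivity) (by norm_num)]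
    linarith
  refine ⟨W * (2 / δ), fun u => ?_⟩
  have h := abs_quad_le hw (fun x hx => norm_traj_sq_le hδ0 hδ1 hx u)
  have h2 := (abs_le.mp h).1
  rw [energy]
  nlinarith [sq_nonneg ‖u.2‖, mul_le_mul_of_nonneg_right hWδ (sq_nonneg ‖u.2‖)]

theorem energy_sub_const {w : ℝ → ℝ} (hw : Integrable w unitMeasure) (c : ℝ) (u : ℂ × UnitL2) :
    energy (fun x => w x - c) u = energy w u - c * quad 1 u := by
  have h : quad (fun x => w x - c) u = quad w u - c * quad 1 u := by
    have h1 : Integrable (fun x => (1 : ℝ → ℝ) x * ‖traj x u‖ ^ 2) unitMeasure :=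
      integrable_quad (w := 1) (integrable_const 1) u
    rw [quad, quad, quad, ← integral_const_mul,
      ← integral_sub (integrable_quad hw u) (h1.const_mul c)]
    congr 1 with x
    simp only [Pi.one_apply]
    ring
  rw [energy, energy, h]
  ring

/-- A bounded sequence has a subsequence whose trajectories are uniformly Cauchy on `[0,1]`. -/
theorem exists_subseq_traj_cauchy (u : ℕ → ℂ × UnitL2) {M : ℝ} (h1 : ∀ n, ‖(u n).1‖ ≤ M)
    (h2 : ∀ n, ‖(u n).2‖ ≤ M) :
    ∃ φ : ℕ → ℕ, StrictMono φ ∧ ∀ ε > 0, ∃ N, ∀ m ≥ N, ∀ n ≥ N, ∀ x ∈ Icc (0:ℝ) 1,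
      ‖traj x (u (φ m) - u (φ n))‖ ≤ ε := by
  have hM : 0 ≤ M := (norm_nonneg _).trans (h1 0)
  let Y : ℕ → BoundedContinuousFunction (Icc (0:ℝ) 1) ℂ := fun n =>
    BoundedContinuousFunction.mkOfCompact
      ⟨fun x => traj x (u n), (continuous_traj (u n)).comp continuous_subtype_val⟩
  have hcomp : IsCompact (closure (range Y)) := by
    refine BoundedContinuousFunction.arzela_ascoli (Metric.closedBall 0 (M + M))
      (isCompact_closedBall _ _) _ ?_ ?_
    · rintro _ x ⟨n, rfl⟩
      rw [mem_closedBall_zero_iff]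
      exact (norm_traj_le x.2 (u n)).trans (add_le_add (h1 n) (h2 n))
    · refine Metric.equicontinuous_of_continuity_modulus (fun d => √d * M) ?_ _ ?_
      · have : Continuous fun d : ℝ => √d * M := by fun_prop
        simpa using this.tendsto 0
      · rintro x y ⟨_, n, rfl⟩
        have key : ∀ x y : Icc (0:ℝ) 1, (y : ℝ) ≤ x → dist (Y n x) (Y n y) ≤ √(dist x y) * M := by
          intro x y hyx
          rw [dist_eq_norm, Subtype.dist_eq, Real.dist_eq, abs_of_nonneg (sub_nonneg.mpr hyx)]
          exact (norm_traj_sub_traj_le hyx (u n)).trans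
            (mul_le_mul_of_nonneg_left (h2 n) (Real.sqrt_nonneg _))
        rcases le_total (y : ℝ) x with h | h
        · exact key x y h
        · have := key y x h
          rwa [dist_comm, dist_comm y x] at this
  obtain ⟨f, -, φ, hφ, hlim⟩ :=
    hcomp.tendsto_subseq fun n => subset_closure (mem_range_self (f := Y) n)
  refine ⟨φ, hφ, fun ε hε => ?_⟩
  obtain ⟨N, hN⟩ := Metric.cauchySeq_iff.mp hlim.cauchySeq ε hε
  refine ⟨N, fun m hm n hn x hx => ?_⟩
  have := (BoundedContinuousFunction.dist_coe_le_dist (f := Y (φ m)) (g := Y (φ n)) ⟨x, hx⟩).trans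
    (hN m hm n hn).le
  rw [map_sub, ← dist_eq_norm]
  exact this

/-- The Rayleigh quotient of the energy form attains its infimum on a closed subspace. -/
theorem exists_energy_minimizer {w : ℝ → ℝ} (hw : Integrable w unitMeasure)
    (K : Submodule ℂ (ℂ × UnitL2)) (hK : IsClosed (K : Set (ℂ × UnitL2)))
    (hne : ∃ z ∈ K, quad 1 z ≠ 0) :
    ∃ u ∈ K, quad 1 u = 1 ∧ ∀ z ∈ K, energy w u * quad 1 z ≤ energy w z := by
  obtain ⟨C, hC⟩ := exists_energy_lower_bound hw
  have h1i : Integrable (1 : ℝ → ℝ) unitMeasure := integrable_const 1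
  let S : Set ℝ := energy w '' {u | u ∈ K ∧ quad 1 u = 1}
  have hscale : ∀ z ∈ K, quad 1 z ≠ 0 → ∃ z' ∈ K, quad 1 z' = 1 ∧
      energy w z = quad 1 z * energy w z' := by
    intro z hz hz0
    have hpos : 0 < quad 1 z := lt_of_le_of_ne (quad_one_nonneg z) (Ne.symm hz0)
    have hn : ‖(((√(quad 1 z))⁻¹ : ℝ) : ℂ)‖ ^ 2 = (quad 1 z)⁻¹ := by
      rw [Complex.norm_real, Real.norm_eq_abs, sq_abs, inv_pow, Real.sq_sqrt hpos.le]
    refine ⟨(((√(quad 1 z))⁻¹ : ℝ) : ℂ) • z, K.smul_mem _ hz, ?_, ?_⟩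
    · rw [quad_smul, hn, inv_mul_cancel₀ hz0]
    · rw [energy_smul, hn, mul_inv_cancel_left₀ hz0]
  have hSne : S.Nonempty := by
    obtain ⟨z, hz, hz0⟩ := hne
    obtain ⟨z', hz', h1, -⟩ := hscale z hz hz0
    exact ⟨_, z', ⟨hz', h1⟩, rfl⟩
  have hSb : BddBelow S := by
    refine ⟨-C, ?_⟩
    rintro _ ⟨u, ⟨-, hu1⟩, rfl⟩
    have := hC u
    rw [hu1] at this
    nlinarith [sq_nonneg ‖u.2‖]
  set l := sInf S with hl
  have hlow : ∀ z ∈ K, l * quad 1 z ≤ energy w z := by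
    intro z hz
    by_cases hz0 : quad 1 z = 0
    · have := hC z
      rw [hz0] at this ⊢
      nlinarith [sq_nonneg ‖z.2‖]
    · obtain ⟨z', hz', h1, h2⟩ := hscale z hz hz0
      rw [h2, mul_comm]
      exact mul_le_mul_of_nonneg_left (csInf_le hSb ⟨z', ⟨hz', h1⟩, rfl⟩) (quad_one_nonneg z)
  have hseq : ∀ n : ℕ, ∃ u, u ∈ K ∧ quad 1 u = 1 ∧ energy w u < l + 1 / ((n : ℝ) + 1) := by
    intro n
    obtain ⟨_, ⟨u, ⟨hu, hu1⟩, rfl⟩, hlt⟩ :=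
      exists_lt_of_csInf_lt hSne (lt_add_of_pos_right l (Nat.one_div_pos_of_nat (n := n)))
    exact ⟨u, hu, hu1, hlt⟩
  choose u huK hu1 hulow using hseq
  obtain ⟨M, hM⟩ : ∃ M : ℝ, ∀ n, ‖(u n).2‖ ^ 2 ≤ M := by
    refine ⟨2 * (l + 1 + C), fun n => ?_⟩
    have h1 := hC (u n)
    have h2 := hulow n
    have h3 : 1 / ((n : ℝ) + 1) ≤ 1 := by
      rw [div_le_one (by positivity)]
      linarith [(Nat.cast_nonneg n : (0:ℝ) ≤ n)]
    rw [hu1] at h1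
    linarith
  have hM0 : 0 ≤ M := (sq_nonneg _).trans (hM 0)
  have hfst : ∀ n, ‖(u n).1‖ ^ 2 ≤ 2 + 2 * M := by
    intro n
    have := norm_traj_sq_le one_pos le_rfl (left_mem_Icc.mpr zero_le_one) (u n)
    rw [traj_zero, hu1] at this
    linarith [hM n]
  obtain ⟨φ, hφ, hcau⟩ := exists_subseq_traj_cauchy u (M := √(2 + 2 * M))
    (fun n => Real.le_sqrt_of_sq_le (hfst n))
    (fun n => Real.le_sqrt_of_sq_le ((hM n).trans (by linarith)))
  set W := (∫ x, |w x - l| ∂unitMeasure) with hW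
  have hwl : Integrable (fun x => w x - l) unitMeasure := hw.sub (integrable_const l)
  have hW0 : 0 ≤ W := integral_nonneg fun x => abs_nonneg _
  have hsum : ∀ m n : ℕ, energy (fun x => w x - l) (u m - u n)
      ≤ 2 * (1 / ((m : ℝ) + 1)) + 2 * (1 / ((n : ℝ) + 1)) := by
    intro m n
    have h1 := energy_parallelogram hwl (u m) (u n)
    have h2 := hlow _ (K.add_mem (huK m) (huK n))
    rw [energy_sub_const hw, energy_sub_const hw _ (u m), energy_sub_const hw _ (u n),
      hu1, hu1] at h1
    linarith [hulow m, hulow n]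
  have hcs : CauchySeq (u ∘ φ) := by
    rw [Metric.cauchySeq_iff']
    intro ε hε
    obtain ⟨N1, hN1⟩ := hcau (min (ε / 2) √(ε ^ 2 / (2 * (W + 1)))) (by positivity)
    obtain ⟨N2, hN2⟩ := exists_nat_one_div_lt (show 0 < ε ^ 2 / 8 by positivity)
    refine ⟨max N1 N2, fun n hn => ?_⟩
    set N := max N1 N2
    have hx := hN1 n ((le_max_left _ _).trans hn) N (le_max_left _ _)
    have hbd : ∀ k ≥ N2, 1 / ((φ k : ℝ) + 1) < ε ^ 2 / 8 := by
      intro k hk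
      refine lt_of_le_of_lt ?_ hN2
      gcongr
      exact hk.trans hφ.le_apply
    have h1 := hsum (φ n) (φ N)
    have h2 := hbd n ((le_max_right _ _).trans hn)
    have h3 := hbd N (le_max_right _ _)
    have h4 : |quad (fun x => w x - l) (u (φ n) - u (φ N))| ≤ W * (ε ^ 2 / (2 * (W + 1))) := by
      refine abs_quad_le hwl fun x hxI => ?_
      have := (hx x hxI).trans (min_le_right _ _)
      calc _ ≤ √(ε ^ 2 / (2 * (W + 1))) ^ 2 := by gcongr
        _ = _ := Real.sq_sqrt (by positivity)
    have h5 : W * (ε ^ 2 / (2 * (W + 1))) ≤ ε ^ 2 / 2 := by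
      rw [mul_div_assoc', div_le_div_iff₀ (by positivity) (by norm_num)]
      nlinarith [sq_nonneg ε]
    have h6 : ‖(u (φ n) - u (φ N)).2‖ ^ 2 < ε ^ 2 := by
      have := (abs_le.mp h4).1
      rw [energy] at h1
      linarith
    have h7 : ‖(u (φ n) - u (φ N)).1‖ < ε := by
      have := (hx 0 (left_mem_Icc.mpr zero_le_one)).trans (min_le_left _ _)
      rw [traj_zero] at this
      linarith
    rw [dist_eq_norm, Prod.norm_def]
    exact max_lt h7 (lt_of_pow_lt_pow_left₀ 2 hε.le h6)
  obtain ⟨v, hv⟩ := cauchySeq_tendsto_of_complete hcs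
  have hvE : Filter.Tendsto (fun n => energy w (u (φ n))) Filter.atTop (nhds (energy w v)) :=
    ((continuous_energy hw).tendsto v).comp hv
  have hvN : Filter.Tendsto (fun n => quad 1 (u (φ n))) Filter.atTop (nhds (quad 1 v)) :=
    ((continuous_quad h1i).tendsto v).comp hv
  have hup : energy w v ≤ l := by
    have h0 : Filter.Tendsto (fun n => l + 1 / ((φ n : ℝ) + 1)) Filter.atTop (nhds (l + 0)) :=
      tendsto_const_nhds.add (tendsto_one_div_add_atTop_nhds_zero_nat.comp hφ.tendsto_atTop)
    rw [add_zero] at h0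
    exact le_of_tendsto_of_tendsto' hvE h0 fun n => (hulow _).le
  refine ⟨v, hK.mem_of_tendsto hv (Filter.Eventually.of_forall fun n => huK _), ?_, fun z hz => ?_⟩
  · simp only [hu1] at hvN
    exact (tendsto_nhds_unique hvN tendsto_const_nhds)
  · exact (mul_le_mul_of_nonneg_right hup (quad_one_nonneg z)).trans (hlow z hz)

/-- Initial value and derivative of the functions with `y 1 = exp (i t) * y 0`. -/
noncomputable def qpSpace (t : ℝ) : Submodule ℂ (ℂ × UnitL2) :=
  LinearMap.ker ((traj 1 - Complex.exp (Complex.I * t) • traj 0 : ℂ × UnitL2 →L[ℂ] ℂ) :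
    ℂ × UnitL2 →ₗ[ℂ] ℂ)

theorem mem_qpSpace {t : ℝ} {u : ℂ × UnitL2} :
    u ∈ qpSpace t ↔ traj 1 u = Complex.exp (Complex.I * t) * u.1 := by
  rw [← traj_zero u]
  exact sub_eq_zero

theorem isClosed_qpSpace (t : ℝ) : IsClosed (qpSpace t : Set (ℂ × UnitL2)) :=
  ContinuousLinearMap.isClosed_ker _

theorem traj_one (u : ℂ × UnitL2) : traj 1 u = u.1 + inner ℂ (stepL2 1) u.2 := rfl

theorem inner_stepL2_one_self : inner ℂ (stepL2 1) (stepL2 1) = (1 : ℂ) := by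
  rw [stepL2, L2.inner_indicatorConstLp_one_indicatorConstLp_one]
  rw [inter_self, measureReal_restrict_apply measurableSet_Iic,
    inter_eq_right.mpr Icc_subset_Iic_self]
  simp

theorem stepL2_one_ae : (stepL2 1 : ℝ → ℂ) =ᵐ[unitMeasure] fun _ => 1 := by
  filter_upwards [indicatorConstLp_coeFn (p := 2) (hs := measurableSet_Iic (a := (1:ℝ)))
    (hμs := measure_ne_top unitMeasure _) (c := (1:ℂ)), ae_restrict_mem measurableSet_Icc]
    with x hx hxI
  rw [stepL2, hx, indicator_of_mem (mem_Iic.mpr hxI.2)]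

theorem memLp_of_continuous {f : ℝ → ℂ} (hf : Continuous f) : MemLp f 2 unitMeasure := by
  obtain ⟨C, hC⟩ := isCompact_Icc.exists_bound_of_continuousOn (s := Icc (0:ℝ) 1) hf.continuousOn
  refine MemLp.of_bound hf.aestronglyMeasurable C ?_
  filter_upwards [ae_restrict_mem measurableSet_Icc] with x hx using hC x hx

theorem integrable_weight_mul {w : ℝ → ℝ} (hw : Integrable w unitMeasure) {g : ℝ → ℂ}
    (hg : Continuous g) : Integrable (fun x => (w x : ℂ) * g x) unitMeasure :=
  MeasureTheory.Integrable.mul_continuous_unit (hw.ofReal (𝕜 := ℂ)) hg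

theorem conj_prim (f : ℝ → ℂ) (x : ℝ) : conj (prim f x) = prim (fun s => conj (f s)) x :=
  integral_conj.symm

/-- Integration by parts in the polar form of the energy. -/
theorem energyPolar_eq {w : ℝ → ℝ} (hw : Integrable w unitMeasure) (u z : ℂ × UnitL2) {p : UnitL2}
    (hp : p =ᵐ[unitMeasure] fun x => u.2 x - prim (fun s => w s * traj s u) x) :
    energyPolar w u z = (inner ℂ z.2 p
      + prim (fun s => w s * traj s u) 1 * conj (traj 1 z)).re := by
  set f : ℝ → ℂ := fun s => w s * traj s u with hf
  have hfi : Integrable f unitMeasure := integrable_weight_mul hw (continuous_traj u)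
  set g : ℝ → ℂ := fun s => conj (z.2 s) with hg
  have hgi : Integrable g unitMeasure :=
    (Complex.conjCLE : ℂ →L[ℝ] ℂ).integrable_comp (integrable_of_unitL2 z.2)
  have h1 : inner ℂ z.2 p = inner ℂ z.2 u.2 - ∫ x, g x * prim f x ∂unitMeasure := by
    rw [L2.inner_def, L2.inner_def, ← integral_sub (L2.integrable_inner _ _)
      (hgi.mul_continuous_unit (continuous_prim hfi))]
    refine integral_congr_ae ?_
    filter_upwards [hp] with x hx
    rw [hx]
    simp only [RCLike.inner_apply, hg]
    ring
  have h2 : ∫ x, w x * (traj x u * conj (traj x z)).re ∂unitMeasure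
      = (∫ x, f x * conj (traj x z) ∂unitMeasure).re := by
    have hi : Integrable (fun x => f x * conj (traj x z)) unitMeasure :=
      hfi.mul_continuous_unit (Complex.continuous_conj.comp (continuous_traj z))
    rw [← RCLike.re_eq_complex_re, ← integral_re hi]
    congr 1 with x
    rw [hf, RCLike.re_eq_complex_re, mul_assoc, Complex.re_ofReal_mul]
  have h3 : ∫ x, f x * conj (traj x z) ∂unitMeasure
      = conj z.1 * prim f 1 + ∫ x, f x * prim g x ∂unitMeasure := by
    rw [prim_one, ← integral_const_mul, ← integral_add (hfi.const_mul _)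
      (hfi.mul_continuous_unit (continuous_prim hgi))]
    congr 1 with x
    rw [traj_apply, map_add, conj_prim]
    ring
  have h4 := prim_mul_prim hfi hgi 1
  rw [prim_one (fun s => f s * prim g s), prim_one (fun s => g s * prim f s)] at h4
  rw [energyPolar, h1, h2, h3, ← Complex.add_re, traj_apply 1 z, map_add, conj_prim]
  congr 1
  linear_combination -h4

theorem energyPolar_eq_zero {w : ℝ → ℝ} (hw : Integrable w unitMeasure)
    {K : Submodule ℂ (ℂ × UnitL2)} {u : ℂ × UnitL2} (hu : u ∈ K) (hu0 : energy w u = 0)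
    (hmin : ∀ z ∈ K, 0 ≤ energy w z) {z : ℂ × UnitL2} (hz : z ∈ K) : energyPolar w u z = 0 := by
  set b := energyPolar w u z
  set Q := energy w z with hQ
  have hQ0 : 0 ≤ Q := hmin z hz
  have h := hmin _ (K.add_mem hu (K.smul_mem ((-b / (Q + 1) : ℝ) : ℂ) hz))
  rw [energy_add_smul hw, hu0] at h
  have h2 : 0 + 2 * (-b / (Q + 1)) * b + (-b / (Q + 1)) ^ 2 * Q
      = -(b ^ 2 * (Q + 2) / (Q + 1) ^ 2) := by
    field_simp
    ring
  rw [h2] at h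
  by_contra hb
  have : 0 < b ^ 2 * (Q + 2) / (Q + 1) ^ 2 := by positivity
  linarith

/-- The Euler–Lagrange equation for a minimizer of the energy under the quasi-periodic boundary
condition, including the natural boundary condition for the derivative. -/
theorem euler_lagrange {w : ℝ → ℝ} (hw : Integrable w unitMeasure) {t : ℝ} {u : ℂ × UnitL2}
    (hu : u ∈ qpSpace t) (hu0 : energy w u = 0) (hmin : ∀ z ∈ qpSpace t, 0 ≤ energy w z) :
    ∃ c : ℂ, (u.2 =ᵐ[unitMeasure] fun x => c + prim (fun s => w s * traj s u) x) ∧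
      c + prim (fun s => w s * traj s u) 1 = Complex.exp (Complex.I * t) * c := by
  set f : ℝ → ℂ := fun s => w s * traj s u with hf
  have hfi : Integrable f unitMeasure := integrable_weight_mul hw (continuous_traj u)
  have hFm := memLp_of_continuous (continuous_prim hfi)
  set p : UnitL2 := u.2 - hFm.toLp (prim f) with hpdef
  have hp : p =ᵐ[unitMeasure] fun x => u.2 x - prim f x := by
    filter_upwards [Lp.coeFn_sub u.2 (hFm.toLp (prim f)), hFm.coeFn_toLp] with x h1 h2
    rw [hpdef, h1, Pi.sub_apply, h2]
  have hpol : ∀ z ∈ qpSpace t, (inner ℂ z.2 p + prim f 1 * conj (traj 1 z)).re = 0 := by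
    intro z hz
    rw [← energyPolar_eq hw u z hp, energyPolar_eq_zero hw hu hu0 hmin hz]
  set e := stepL2 1 with he
  have hee : inner ℂ e e = (1 : ℂ) := inner_stepL2_one_self
  set c : ℂ := inner ℂ e p with hc
  have hpe : p = c • e := by
    have horth : inner ℂ e (p - c • e) = (0 : ℂ) := by
      rw [inner_sub_right, inner_smul_right, hee, mul_one, sub_self]
    have htr : traj 1 ((0 : ℂ), p - c • e) = 0 := by
      rw [traj_one, zero_add]
      exact horth
    have h := hpol (0, p - c • e) (by rw [mem_qpSpace, htr, mul_zero])
    rw [htr, map_zero, mul_zero, add_zero] at h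
    have h2 : inner ℂ (p - c • e) p = inner ℂ (p - c • e) (p - c • e) := by
      rw [inner_sub_right (p - c • e) p, inner_smul_right, ← inner_conj_symm (p - c • e) e, horth,
        map_zero, mul_zero, sub_zero]
    rw [h2, ← RCLike.re_eq_complex_re, inner_self_eq_norm_sq] at h
    exact sub_eq_zero.mp (norm_eq_zero.mp (pow_eq_zero_iff two_ne_zero |>.mp h))
  refine ⟨c, ?_, ?_⟩
  · filter_upwards [hp, Lp.coeFn_smul c e, stepL2_one_ae] with x h1 h2 h3
    rw [hpe, h2, Pi.smul_apply, h3, smul_eq_mul, mul_one] at h1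
    rw [h1]
    ring
  · set E := Complex.exp (Complex.I * t) with hE
    have hEE : E * conj E = 1 := by
      rw [hE, ← Complex.exp_conj, ← Complex.exp_add]
      simp
    set X := conj (E - 1) * c + prim f 1 * conj E with hX
    have htr : traj 1 (X, ((E - 1) * X) • e) = E * X := by
      rw [traj_one, inner_smul_right, hee]
      ring
    have h := hpol (X, ((E - 1) * X) • e) (by rw [mem_qpSpace, htr])
    rw [htr, inner_smul_left, ← hc] at h
    have h2 : conj ((E - 1) * X) * c + prim f 1 * conj (E * X) = X * conj X := by
      rw [map_mul, map_mul]
      nth_rewrite 3 [hX]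
      ring
    rw [h2, Complex.mul_conj, Complex.ofReal_re, Complex.normSq_eq_zero] at h
    rw [hX, map_sub, map_one] at h
    linear_combination E * h + (-c - prim f 1) * hEE

theorem isQPEigenvalue_of_minimizer {q : ℝ → ℝ} (hq : Integrable q unitMeasure) {t l : ℝ}
    {u : ℂ × UnitL2} (hu : u ∈ qpSpace t) (hu0 : energy (fun x => q x - l) u = 0)
    (hmin : ∀ z ∈ qpSpace t, 0 ≤ energy (fun x => q x - l) z) (hne : quad 1 u ≠ 0) :
    IsQPEigenvalue q t l := by
  have hw : Integrable (fun x => q x - l) unitMeasure := hq.sub (integrable_const l)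
  obtain ⟨c, hae, hbd⟩ := euler_lagrange hw hu hu0 hmin
  set f : ℝ → ℂ := fun s => ((q s - l : ℝ) : ℂ) * traj s u with hf
  have hfi : Integrable f unitMeasure := integrable_weight_mul hw (continuous_traj u)
  have hg : Continuous fun x => c + prim f x := continuous_const.add (continuous_prim hfi)
  refine ⟨fun x => traj x u, fun x => c + prim f x, f, ?_, ?_, hg.continuousOn, hfi, ?_, ?_, ?_, ?_⟩
  · by_contra! h
    refine hne (integral_eq_zero_of_ae ?_)
    filter_upwards [ae_restrict_mem measurableSet_Icc] with x hx
    simp [h x hx]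
  · intro x hx
    have hy : ∀ z ∈ Icc (0:ℝ) 1, traj z u = u.1 + ∫ s in (0:ℝ)..z, (c + prim f s) := by
      intro z hz
      rw [traj_apply, prim_congr_ae hae, prim_eq_intervalIntegral _ hz]
    exact ((hg.integral_hasStrictDerivAt 0 x).hasDerivAt.const_add u.1).hasDerivWithinAt.congr
      hy (hy x hx)
  · intro x hx
    simp only [prim_zero, prim_eq_intervalIntegral f hx, add_zero]
  · refine Filter.Eventually.of_forall fun x => ?_
    simp only [hf]
    push_cast
    ring
  · rw [mem_qpSpace, ← traj_zero u] at hu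
    exact hu
  · simpa only [prim_zero, add_zero] using hbd

theorem ae_eq_zero_of_prim_eq_zero {f : ℝ → ℂ} (hf : Integrable f unitMeasure)
    (h : ∀ x ∈ Icc (0:ℝ) 1, prim f x = 0) : f =ᵐ[unitMeasure] 0 := by
  have hi : IntervalIntegrable f volume 0 1 := by
    rw [intervalIntegrable_iff_integrableOn_Icc_of_le zero_le_one]
    exact hf
  rw [unitMeasure, ← Measure.restrict_congr_set Ioo_ae_eq_Icc]
  filter_upwards [ae_restrict_of_ae hi.ae_hasDerivAt_integral,
    ae_restrict_mem measurableSet_Ioo] with x hx hxI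
  rw [uIcc_of_le zero_le_one] at hx
  have h1 := hx (Ioo_subset_Icc_self hxI) 0 (left_mem_Icc.mpr zero_le_one)
  have h2 : (fun x => ∫ s in (0:ℝ)..x, f s) =ᶠ[nhds x] fun _ => 0 := by
    filter_upwards [isOpen_Ioo.mem_nhds hxI] with z hz
    rw [← prim_eq_intervalIntegral f (Ioo_subset_Icc_self hz), h z (Ioo_subset_Icc_self hz)]
  exact h1.unique ((hasDerivAt_const x (0:ℂ)).congr_of_eventuallyEq h2)

theorem hasDerivAt_cexp_mul (a : ℂ) (x : ℝ) :
    HasDerivAt (fun s : ℝ => Complex.exp (a * s)) (a * Complex.exp (a * x)) x := by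
  have h : HasDerivAt (fun s : ℝ => a * (s : ℂ)) (a * 1) x :=
    (Complex.ofRealCLM.hasDerivAt (x := x)).const_mul a
  rw [mul_one] at h
  simpa [mul_comm] using h.cexp

theorem prim_cexp (a : ℂ) {x : ℝ} (hx : x ∈ Icc (0:ℝ) 1) :
    prim (fun s => a * Complex.exp (a * s)) x = Complex.exp (a * x) - 1 := by
  rw [prim_eq_intervalIntegral _ hx, intervalIntegral.integral_eq_sub_of_hasDerivAt
    (fun s _ => hasDerivAt_cexp_mul a s) (Continuous.intervalIntegrable (by fun_prop) _ _)]
  simp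

/-- If `q` has mean zero and the lowest eigenvalue of `L_t(q)` is at least that of an exponential
of the unperturbed problem, then `q` vanishes. -/
theorem ae_eq_zero_of_eigenvalue_ge {q : ℝ → ℝ} (hq : Integrable q unitMeasure) {t k : ℝ}
    (hk : Complex.exp (Complex.I * k) = Complex.exp (Complex.I * t))
    (hmean : ∫ x, q x ∂unitMeasure = 0)
    (hlow : ∀ l : ℝ, IsQPEigenvalue q t l → k ^ 2 ≤ l) : ∀ᵐ x ∂unitMeasure, q x = 0 := by
  set a : ℂ := Complex.I * k with ha
  have hcont : Continuous fun x : ℝ => a * Complex.exp (a * x) := by fun_prop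
  have hm := memLp_of_continuous hcont
  set φ : ℂ × UnitL2 := (1, hm.toLp _) with hφ
  have hφ2 : φ.2 =ᵐ[unitMeasure] fun x : ℝ => a * Complex.exp (a * x) := hm.coeFn_toLp
  have htraj : ∀ x ∈ Icc (0:ℝ) 1, traj x φ = Complex.exp (a * x) := by
    intro x hx
    rw [traj_apply, prim_congr_ae hφ2, prim_cexp a hx]
    simp [φ]
  have hexp : ∀ x : ℝ, ‖Complex.exp (a * x)‖ = 1 := by
    intro x
    rw [ha, mul_assoc, mul_comm, ← Complex.ofReal_mul, Complex.norm_exp_ofReal_mul_I]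
  have hφK : φ ∈ qpSpace t := by
    rw [mem_qpSpace, htraj 1 (right_mem_Icc.mpr zero_le_one), ← hk]
    simp [φ]
  have hquad : ∀ w : ℝ → ℝ, quad w φ = ∫ x, w x ∂unitMeasure := by
    intro w
    refine integral_congr_ae ?_
    filter_upwards [ae_restrict_mem measurableSet_Icc] with x hx
    rw [htraj x hx, hexp]
    simp
  have hquad1 : quad 1 φ = 1 := by
    rw [hquad]
    simp
  have hnorm : ‖φ.2‖ ^ 2 = k ^ 2 := by
    rw [← @inner_self_eq_norm_sq ℂ, L2.inner_def]
    have : ∫ x, inner ℂ (φ.2 x) (φ.2 x) ∂unitMeasure = ∫ x, ((k ^ 2 : ℝ) : ℂ) ∂unitMeasure := by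
      refine integral_congr_ae ?_
      filter_upwards [hφ2] with x hx
      rw [hx, inner_self_eq_norm_sq_to_K, norm_mul, hexp, ha]
      simp [← Complex.ofReal_pow]
    rw [this]
    simp [-Complex.ofReal_pow]
  have hφE : energy (fun x => q x - k ^ 2) φ = 0 := by
    rw [energy_sub_const hq, hquad1, energy, hnorm, hquad, hmean]
    ring
  obtain ⟨u, huK, hu1, humin⟩ := exists_energy_minimizer hq (qpSpace t) (isClosed_qpSpace t)
    ⟨φ, hφK, by rw [hquad1]; exact one_ne_zero⟩
  have hl : k ^ 2 ≤ energy q u := by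
    refine hlow _ (isQPEigenvalue_of_minimizer hq huK ?_ (fun z hz => ?_)
      (by rw [hu1]; exact one_ne_zero))
    · rw [energy_sub_const hq, hu1]
      ring
    · rw [energy_sub_const hq]
      exact sub_nonneg.mpr (humin z hz)
  have hmin : ∀ z ∈ qpSpace t, 0 ≤ energy (fun x => q x - k ^ 2) z := by
    intro z hz
    rw [energy_sub_const hq]
    exact sub_nonneg.mpr ((mul_le_mul_of_nonneg_right hl (quad_one_nonneg z)).trans (humin z hz))
  have hw : Integrable (fun x => q x - k ^ 2) unitMeasure := hq.sub (integrable_const _)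
  obtain ⟨c, hae, -⟩ := euler_lagrange hw hφK hφE hmin
  have hecont : Continuous fun x : ℝ => Complex.exp (a * x) := by fun_prop
  set Q : ℝ → ℂ := fun x => (q x : ℂ) * Complex.exp (a * x) with hQ
  have hQi : Integrable Q unitMeasure := integrable_weight_mul hq hecont
  have hsplit : (fun x => ((q x - k ^ 2 : ℝ) : ℂ) * traj x φ)
      =ᵐ[unitMeasure] fun x => Q x + a * (a * Complex.exp (a * x)) := by
    filter_upwards [ae_restrict_mem measurableSet_Icc] with x hx
    rw [htraj x hx, hQ, ha]
    push_cast
    linear_combination (-(k:ℂ) ^ 2 * Complex.exp (Complex.I * k * x)) * Complex.I_sq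
  rw [prim_congr_ae hsplit] at hae
  have hci : Integrable (fun x : ℝ => a * (a * Complex.exp (a * x))) unitMeasure :=
    (memLp_of_continuous (hcont.const_mul a)).integrable one_le_two
  have heq : ∀ x ∈ Icc (0:ℝ) 1, a * Complex.exp (a * x)
      = c + prim (fun x => Q x + a * (a * Complex.exp (a * x))) x :=
    Measure.eqOn_Icc_of_ae_eq volume zero_ne_one (hφ2.symm.trans hae) hcont.continuousOn
      (continuous_const.add (continuous_prim (hQi.add hci))).continuousOn
  have hconst : ∀ x ∈ Icc (0:ℝ) 1, prim Q x = a - c := by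
    intro x hx
    have h := heq x hx
    rw [prim_add hQi hci, prim_const_mul, prim_cexp a hx] at h
    linear_combination -h
  have hz : a - c = 0 := by
    rw [← hconst 0 (left_mem_Icc.mpr zero_le_one), prim_zero]
  filter_upwards [ae_eq_zero_of_prim_eq_zero hQi fun x hx => (hconst x hx).trans hz] with x hx
  simpa [hQ] using hx

theorem const_add_prim_mul {f g : ℝ → ℂ} (hf : Integrable f unitMeasure)
    (hg : Integrable g unitMeasure) (a b : ℂ) (x : ℝ) :
    (a + prim f x) * (b + prim g x)
      = a * b + prim (fun s => f s * (b + prim g s) + g s * (a + prim f s)) x := by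
  have hfg := hf.mul_continuous_unit (continuous_prim hg)
  have hgf := hg.mul_continuous_unit (continuous_prim hf)
  have h : (fun s => f s * (b + prim g s) + g s * (a + prim f s))
      = fun s => (b * f s + f s * prim g s) + (a * g s + g s * prim f s) := by
    ext s
    ring
  have i1 : Integrable (fun s => b * f s + f s * prim g s) unitMeasure := (hf.const_mul b).add hfg
  have i2 : Integrable (fun s => a * g s + g s * prim f s) unitMeasure := (hg.const_mul a).add hgf
  rw [h, prim_add i1 i2,
    prim_add (hf.const_mul b) hfg, prim_add (hg.const_mul a) hgf, prim_const_mul, prim_const_mul]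
  linear_combination prim_mul_prim hf hg x

/-- The global data of an eigenfunction: `y` and `y'` agree on `[0,1]` with primitives of integrable
functions on the line. -/
theorem IsQPEigenpair.exists_prim {q : ℝ → ℝ} {t : ℝ} {lam : ℂ} {y g h : ℝ → ℂ}
    (H : IsQPEigenpair q t lam y g h) :
    (∀ x ∈ Icc (0:ℝ) 1, g x = g 0 + prim h x) ∧
      ∀ x ∈ Icc (0:ℝ) 1, y x = y 0 + prim (fun s => g 0 + prim h s) x := by
  obtain ⟨-, hy, hgc, hh, hg, -⟩ := H
  have hg' : ∀ x ∈ Icc (0:ℝ) 1, g x = g 0 + prim h x := fun x hx => by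
    rw [prim_eq_intervalIntegral h hx, ← hg x hx]
  refine ⟨hg', fun x hx => ?_⟩
  have hsub : Icc 0 x ⊆ Icc (0:ℝ) 1 := Icc_subset_Icc_right hx.2
  have hi : IntervalIntegrable g volume 0 x :=
    (hgc.mono hsub).intervalIntegrable_of_Icc hx.1
  have h1 : ∫ s in (0:ℝ)..x, g s = y x - y 0 := by
    refine intervalIntegral.integral_eq_sub_of_hasDeriv_right_of_le hx.1
      (fun s hs => ((hy s (hsub hs)).continuousWithinAt.mono hsub)) (fun s hs => ?_) hi
    exact ((hy s (hsub (Ioo_subset_Icc_self hs))).hasDerivAt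
      (Icc_mem_nhds hs.1 (hs.2.trans_le hx.2))).hasDerivWithinAt
  rw [prim_eq_intervalIntegral _ hx, ← intervalIntegral.integral_congr (f := g), h1]
  · ring
  · intro s hs
    rw [uIcc_of_le hx.1] at hs
    exact hg' s (hsub hs)

/-- Variation of constants for `-y'' + q y = -a² y`. -/
theorem variation_of_constants {q : ℝ → ℝ} {h : ℝ → ℂ} (hh : Integrable h unitMeasure)
    (a g0 y0 : ℂ) {G Y : ℝ → ℂ} (hG : G = fun x => g0 + prim h x)
    (hY : Y = fun x => y0 + prim G x)
    (hode : ∀ᵐ x ∂unitMeasure, -h x + (q x : ℂ) * Y x = -a ^ 2 * Y x) {x : ℝ}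
    (hx : x ∈ Icc (0:ℝ) 1) :
    (G x + a * Y x) * Complex.exp (-a * x)
      = (g0 + a * y0) + prim (fun s => q s * (Y s * Complex.exp (-a * s))) x := by
  have hGc : Continuous G := by
    rw [hG]
    exact continuous_const.add (continuous_prim hh)
  have hGi : Integrable G unitMeasure := (memLp_of_continuous hGc).integrable one_le_two
  have hvi : Integrable (fun s => h s + a * G s) unitMeasure := hh.add (hGi.const_mul a)
  have hec : Continuous fun s : ℝ => -a * Complex.exp (-a * s) := by fun_prop
  have hei := (memLp_of_continuous hec).integrable one_le_two
  have hV : ∀ s, G s + a * Y s = (g0 + a * y0) + prim (fun s => h s + a * G s) s := by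
    intro s
    rw [prim_add hh (hGi.const_mul a), prim_const_mul, hY]
    nth_rewrite 1 [hG]
    ring
  have hE : ∀ s ∈ Icc (0:ℝ) 1, Complex.exp (-a * s)
      = 1 + prim (fun s : ℝ => -a * Complex.exp (-a * s)) s := by
    intro s hs
    rw [prim_cexp (-a) hs]
    ring
  rw [hV, hE x hx, const_add_prim_mul hvi hei, mul_one]
  congr 1
  refine congrFun (prim_congr_ae ?_) x
  filter_upwards [hode, ae_restrict_mem measurableSet_Icc] with s hs hsI
  rw [← hE s hsI, ← hV s]
  linear_combination Complex.exp (-a * s) * (-hs)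

theorem norm_integral_mul_le {q : ℝ → ℝ} (hq : Integrable q unitMeasure) {f : ℝ → ℂ} {C : ℝ}
    (hC : ∀ x ∈ Icc (0:ℝ) 1, ‖f x‖ ≤ C) :
    ‖∫ x, (q x : ℂ) * f x ∂unitMeasure‖ ≤ (∫ x, |q x| ∂unitMeasure) * C := by
  rw [← integral_mul_const]
  refine norm_integral_le_of_norm_le (hq.abs.mul_const C) ?_
  filter_upwards [ae_restrict_mem measurableSet_Icc] with x hx
  rw [norm_mul, Complex.norm_real, Real.norm_eq_abs]
  exact mul_le_mul_of_nonneg_left (hC x hx) (abs_nonneg _)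

theorem norm_prim_mul_le {q : ℝ → ℝ} (hq : Integrable q unitMeasure) {f : ℝ → ℂ}
    (hf : Continuous f) {C : ℝ} (hC : ∀ x ∈ Icc (0:ℝ) 1, ‖f x‖ ≤ C) (x : ℝ) :
    ‖prim (fun s => (q s : ℂ) * f s) x‖ ≤ (∫ x, |q x| ∂unitMeasure) * C := by
  refine (norm_prim_le (integrable_weight_mul hq hf) x).trans ?_
  rw [← integral_mul_const]
  refine integral_mono_ae (integrable_weight_mul hq hf).norm (hq.abs.mul_const C) ?_
  filter_upwards [ae_restrict_mem measurableSet_Icc] with x hx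
  rw [norm_mul, Complex.norm_real, Real.norm_eq_abs]
  exact mul_le_mul_of_nonneg_left (hC x hx) (abs_nonneg _)

theorem norm_cexp_I_mul (k x : ℝ) : ‖Complex.exp (Complex.I * k * x)‖ = 1 := by
  rw [mul_assoc, mul_comm, ← Complex.ofReal_mul, Complex.norm_exp_ofReal_mul_I]

/-- Suppose `2 i k Y = A e^{ikx} - B e^{-ikx}` where `A` and `B` stay within `D` of the constants
`α` and `β`, and `Y` is `q`-orthogonal to `e^{-ikx}`. Then `β ∫ q` is small. -/
theorem norm_mul_mean_le {q : ℝ → ℝ} (hq : Integrable q unitMeasure) {k : ℝ} {Y A B : ℝ → ℂ}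
    (hA : Continuous A) (hB : Continuous B) {α β : ℂ} {D : ℝ}
    (hAα : ∀ x ∈ Icc (0:ℝ) 1, ‖A x - α‖ ≤ D) (hBβ : ∀ x ∈ Icc (0:ℝ) 1, ‖B x - β‖ ≤ D)
    (hY : ∀ x ∈ Icc (0:ℝ) 1, 2 * (Complex.I * k) * Y x
      = A x * Complex.exp (Complex.I * k * x) - B x * Complex.exp (-(Complex.I * k) * x))
    (horth : ∫ x, q x * (Y x * Complex.exp (Complex.I * k * x)) ∂unitMeasure = 0) :
    ‖β‖ * |∫ x, q x ∂unitMeasure|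
      ≤ ‖α‖ * ‖∫ x, q x * Complex.exp (2 * (Complex.I * k) * x) ∂unitMeasure‖
        + 2 * (∫ x, |q x| ∂unitMeasure) * D := by
  have he : Continuous fun x : ℝ => Complex.exp (2 * (Complex.I * k) * x) := by fun_prop
  have hen : ∀ x : ℝ, ‖Complex.exp (2 * (Complex.I * k) * x)‖ = 1 := by
    intro x
    have := norm_cexp_I_mul (2 * k) x
    rw [← this]
    push_cast
    ring_nf
  have i1 : Integrable (fun x => (q x : ℂ) * ((A x - α) * Complex.exp (2 * (Complex.I * k) * x)))
      unitMeasure := integrable_weight_mul hq ((hA.sub (continuous_const (y := α))).mul he)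
  have i2 : Integrable (fun x => (q x : ℂ) * (B x - β)) unitMeasure :=
    integrable_weight_mul hq (hB.sub (continuous_const (y := β)))
  have i3 := integrable_weight_mul hq he
  have hq' : Integrable (fun x => (q x : ℂ)) unitMeasure := hq.ofReal
  have hid : β * ∫ x, (q x : ℂ) ∂unitMeasure
      = α * ∫ x, q x * Complex.exp (2 * (Complex.I * k) * x) ∂unitMeasure
        + ∫ x, q x * ((A x - α) * Complex.exp (2 * (Complex.I * k) * x)) ∂unitMeasure
        - ∫ x, q x * (B x - β) ∂unitMeasure := by
    have h0 : ∫ x, 2 * (Complex.I * k) * (q x * (Y x * Complex.exp (Complex.I * k * x)))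
        ∂unitMeasure = 0 := by rw [integral_const_mul, horth, mul_zero]
    have h1 : ∫ x, 2 * (Complex.I * k) * (q x * (Y x * Complex.exp (Complex.I * k * x)))
        ∂unitMeasure = ∫ x, ((α * (q x * Complex.exp (2 * (Complex.I * k) * x))
          + q x * ((A x - α) * Complex.exp (2 * (Complex.I * k) * x)))
          - (q x * (B x - β) + β * q x)) ∂unitMeasure := by
      refine integral_congr_ae ?_
      filter_upwards [ae_restrict_mem measurableSet_Icc] with x hx
      have e1 : Complex.exp (2 * (Complex.I * k) * x)
          = Complex.exp (Complex.I * k * x) * Complex.exp (Complex.I * k * x) := by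
        rw [← Complex.exp_add]
        ring_nf
      have e2 : Complex.exp (-(Complex.I * k) * x) * Complex.exp (Complex.I * k * x) = 1 := by
        rw [← Complex.exp_add]
        simp
      rw [e1]
      linear_combination (q x * Complex.exp (Complex.I * k * x)) * hY x hx - (q x) * B x * e2
    have i12 : Integrable (fun x => α * (q x * Complex.exp (2 * (Complex.I * k) * x))
          + q x * ((A x - α) * Complex.exp (2 * (Complex.I * k) * x))) unitMeasure :=
      (i3.const_mul α).add i1
    have i34 : Integrable (fun x => q x * (B x - β) + β * q x) unitMeasure :=
      i2.add (hq'.const_mul β)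
    rw [h0, integral_sub i12 i34, integral_add (i3.const_mul α) i1,
      integral_add i2 (hq'.const_mul β), integral_const_mul, integral_const_mul] at h1
    linear_combination h1
  have b1 := norm_integral_mul_le hq
    (f := fun x => (A x - α) * Complex.exp (2 * (Complex.I * k) * x))
    (C := D) (fun x hx => by rw [norm_mul, hen, mul_one]; exact hAα x hx)
  have b2 := norm_integral_mul_le hq (f := fun x => B x - β) hBβ
  have hqn : |∫ x, q x ∂unitMeasure| = ‖∫ x, (q x : ℂ) ∂unitMeasure‖ := by
    rw [integral_complex_ofReal, Complex.norm_real, Real.norm_eq_abs]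
  rw [hqn, ← norm_mul, hid]
  refine (norm_sub_le _ _).trans ?_
  have := norm_add_le (α * ∫ x, q x * Complex.exp (2 * (Complex.I * k) * x) ∂unitMeasure)
    (∫ x, q x * ((A x - α) * Complex.exp (2 * (Complex.I * k) * x)) ∂unitMeasure)
  rw [norm_mul] at this
  linarith

theorem norm_integral_cexp_neg (q : ℝ → ℝ) (k : ℝ) :
    ‖∫ x, q x * Complex.exp (2 * (Complex.I * (-k : ℝ)) * x) ∂unitMeasure‖
      = ‖∫ x, q x * Complex.exp (2 * (Complex.I * k) * x) ∂unitMeasure‖ := by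
  rw [← Complex.norm_conj, ← integral_conj]
  congr 2 with x
  rw [map_mul, Complex.conj_ofReal, ← Complex.exp_conj]
  simp [map_ofNat]

/-- A quantitative bound for the mean of `q` from one large eigenvalue `k²` of `L_t(q)` that is also
an eigenvalue of the unperturbed problem. -/
theorem abs_mean_le {q : ℝ → ℝ} (hq : Integrable q unitMeasure) {t k : ℝ} (hk : 0 < k)
    (hkN : 2 * ∫ x, |q x| ∂unitMeasure ≤ k)
    (hexp : Complex.exp (Complex.I * t) * Complex.exp (Complex.I * k) = 1)
    (hev : IsQPEigenvalue q t ((k ^ 2 : ℝ) : ℂ)) :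
    |∫ x, q x ∂unitMeasure|
      ≤ ‖∫ x, q x * Complex.exp (2 * (Complex.I * k) * x) ∂unitMeasure‖
        + (4 * (∫ x, |q x| ∂unitMeasure) ^ 2 + (∫ x, |q x| ∂unitMeasure)
          * |∫ x, q x ∂unitMeasure| / ‖Complex.exp (Complex.I * t) ^ 2 - 1‖) / k := by
  obtain ⟨y, g, h, H⟩ := hev
  obtain ⟨hg, hy⟩ := H.exists_prim
  obtain ⟨⟨x₁, hx₁, hyx₁⟩, -, -, hh, -, hode, hby, hbg⟩ := H
  set N := ∫ x, |q x| ∂unitMeasure with hN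
  have hN0 : 0 ≤ N := integral_nonneg fun x => abs_nonneg _
  set G : ℝ → ℂ := fun x => g 0 + prim h x with hG
  set Y : ℝ → ℂ := fun x => y 0 + prim G x with hY
  have hGc : Continuous G := continuous_const.add (continuous_prim hh)
  have hYc : Continuous Y := continuous_const.add
    (continuous_prim ((memLp_of_continuous hGc).integrable one_le_two))
  set a : ℂ := Complex.I * k with ha
  have ha2 : a ^ 2 = -(k ^ 2 : ℝ) := by
    rw [ha, mul_pow, Complex.I_sq]
    push_cast
    ring
  have hode' : ∀ᵐ x ∂unitMeasure, -h x + (q x : ℂ) * Y x = -a ^ 2 * Y x := by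
    filter_upwards [hode, ae_restrict_mem measurableSet_Icc] with x hx hxI
    rw [ha2, neg_neg]
    rw [hy x hxI] at hx
    exact hx
  have h1mem : (1:ℝ) ∈ Icc (0:ℝ) 1 := right_mem_Icc.mpr zero_le_one
  have hA := fun x hx => variation_of_constants hh a (g 0) (y 0) hG hY hode' (x := x) hx
  have hB := fun x hx => variation_of_constants hh (-a) (g 0) (y 0) hG hY
    (by simpa using hode') (x := x) hx
  simp only [neg_neg] at hB
  set α : ℂ := g 0 + a * y 0 with hα
  set β : ℂ := g 0 + -a * y 0 with hβ
  set A : ℝ → ℂ := fun x => (G x + a * Y x) * Complex.exp (-a * x) with hAdef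
  set B : ℝ → ℂ := fun x => (G x + -a * Y x) * Complex.exp (a * x) with hBdef
  have hen : ∀ x : ℝ, ‖Complex.exp (a * x)‖ = 1 := norm_cexp_I_mul k
  have hen' : ∀ x : ℝ, ‖Complex.exp (-a * x)‖ = 1 := by
    intro x
    have := norm_cexp_I_mul (-k) x
    rw [← this, ha]
    simp
  have hee : ∀ x : ℝ, Complex.exp (-a * x) * Complex.exp (a * x) = 1 := by
    intro x
    rw [← Complex.exp_add]
    simp
  obtain ⟨x₀, hx₀, hmax⟩ := isCompact_Icc.exists_isMaxOn (nonempty_Icc.mpr zero_le_one)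
    hYc.norm.continuousOn
  set M := ‖Y x₀‖ with hM
  have hYM : ∀ x ∈ Icc (0:ℝ) 1, ‖Y x‖ ≤ M := fun x hx => hmax hx
  have hM0 : 0 < M := by
    refine lt_of_lt_of_le ?_ (hYM x₁ hx₁)
    rw [norm_pos_iff]
    exact fun h0 => hyx₁ ((hy x₁ hx₁).trans h0)
  have hAc : Continuous A := by fun_prop
  have hBc : Continuous B := by fun_prop
  have hAα : ∀ x ∈ Icc (0:ℝ) 1, ‖A x - α‖ ≤ N * M := by
    intro x hx
    rw [show A x = α + prim (fun s => q s * (Y s * Complex.exp (-a * s))) x from hA x hx,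
      add_sub_cancel_left]
    exact norm_prim_mul_le hq (by fun_prop)
      (fun s hs => by rw [norm_mul, hen', mul_one]; exact hYM s hs) x
  have hBβ : ∀ x ∈ Icc (0:ℝ) 1, ‖B x - β‖ ≤ N * M := by
    intro x hx
    rw [show B x = β + prim (fun s => q s * (Y s * Complex.exp (a * s))) x from hB x hx,
      add_sub_cancel_left]
    exact norm_prim_mul_le hq (by fun_prop)
      (fun s hs => by rw [norm_mul, hen, mul_one]; exact hYM s hs) x
  have hYAB : ∀ x, 2 * a * Y x = A x * Complex.exp (a * x) - B x * Complex.exp (-a * x) := by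
    intro x
    simp only [hAdef, hBdef]
    linear_combination (-2 * a * Y x) * hee x
  have hYAB' : ∀ x, 2 * -a * Y x = B x * Complex.exp (-a * x) - A x * Complex.exp (a * x) := by
    intro x
    linear_combination -hYAB x
  set S := ‖α‖ + ‖β‖ with hS
  have hkM : k * M ≤ S := by
    have h1 : ‖2 * a * Y x₀‖ = 2 * k * M := by
      rw [norm_mul, norm_mul, ha, norm_mul, Complex.norm_I, Complex.norm_real, Real.norm_eq_abs,
        abs_of_pos hk]
      simp [hM]
    have h2 : ‖2 * a * Y x₀‖ ≤ ‖A x₀‖ + ‖B x₀‖ := by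
      rw [hYAB]
      refine (norm_sub_le _ _).trans ?_
      rw [norm_mul (A x₀), norm_mul (B x₀), hen, hen', mul_one, mul_one]
    have h3 := norm_sub_norm_le (A x₀) α
    have h4 := norm_sub_norm_le (B x₀) β
    have h5 := hAα x₀ hx₀
    have h6 := hBβ x₀ hx₀
    nlinarith
  have hS0 : 0 < S := lt_of_lt_of_le (mul_pos hk hM0) hkM
  have hMS : M ≤ S / k := by
    rw [le_div_iff₀ hk, mul_comm]
    exact hkM
  have hG1 : G 1 = Complex.exp (Complex.I * t) * g 0 := by rw [hG, ← hbg, hg 1 h1mem]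
  have hY1 : Y 1 = Complex.exp (Complex.I * t) * y 0 := by rw [hY, ← hby, hy 1 h1mem]
  have hexpn : Complex.exp (-a) = Complex.exp (Complex.I * t) := by
    have h1 : Complex.exp (-a) * Complex.exp a = 1 := by simpa using hee 1
    exact mul_right_cancel₀ (Complex.exp_ne_zero a) (h1.trans hexp.symm)
  have hB1 : ∫ x, q x * (Y x * Complex.exp (a * x)) ∂unitMeasure = 0 := by
    rw [← prim_one]
    have h1 := hB 1 h1mem
    rw [hG1, hY1, Complex.ofReal_one, mul_one] at h1
    linear_combination -h1 + β * hexp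
  have hA1 : ∫ x, q x * (Y x * Complex.exp (-a * x)) ∂unitMeasure
      = (Complex.exp (Complex.I * t) ^ 2 - 1) * α := by
    rw [← prim_one]
    have h1 := hA 1 h1mem
    rw [hG1, hY1, Complex.ofReal_one, mul_one, hexpn] at h1
    linear_combination -h1
  set r := ‖∫ x, q x * Complex.exp (2 * a * x) ∂unitMeasure‖ with hr
  set m := |∫ x, q x ∂unitMeasure| with hm
  have hm0 : 0 ≤ m := abs_nonneg _
  set d := ‖Complex.exp (Complex.I * t) ^ 2 - 1‖ with hd
  have hr0 : 0 ≤ r := norm_nonneg _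
  have key1 : ‖β‖ * m ≤ ‖α‖ * r + 2 * N * (N * M) :=
    norm_mul_mean_le hq hAc hBc hAα hBβ (fun x _ => hYAB x) hB1
  have hNM : N * (N * M) ≤ N ^ 2 * (S / k) := by
    have := mul_le_mul_of_nonneg_left hMS (mul_nonneg hN0 hN0)
    linarith
  have final : S * m ≤ S * (r + (4 * N ^ 2 + N * m / d) / k) := by
    have hexpand : S * (r + (4 * N ^ 2 + N * m / d) / k)
        = S * r + 4 * (N ^ 2 * (S / k)) + N * (S / k) * m / d := by
      ring
    rw [hexpand]
    by_cases hd0 : d = 0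
    · have hna : Complex.I * ((-k : ℝ) : ℂ) = -a := by
        rw [ha]
        push_cast
        ring
      have hA0 : ∫ x, q x * (Y x * Complex.exp (-a * x)) ∂unitMeasure = 0 := by
        rw [hA1, norm_eq_zero.mp hd0, zero_mul]
      have key2 := norm_mul_mean_le (Y := Y) (A := B) (B := A) (k := -k) hq hBc hAc hBβ hAα
        (fun x _ => by rw [hna, neg_neg]; exact hYAB' x) (by rw [hna]; exact hA0)
      rw [norm_integral_cexp_neg] at key2
      rw [hd0, div_zero, add_zero]
      have : S * m = ‖α‖ * m + ‖β‖ * m := by rw [hS]; ring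
      have : S * r = ‖α‖ * r + ‖β‖ * r := by rw [hS]; ring
      linarith
    · have hdpos : 0 < d := lt_of_le_of_ne (norm_nonneg _) (Ne.symm hd0)
      have h1 : d * ‖α‖ ≤ N * M := by
        rw [hd, ← norm_mul, ← hA1]
        exact norm_integral_mul_le hq
          (fun s hs => by rw [norm_mul, hen', mul_one]; exact hYM s hs)
      have h2 : ‖α‖ * m ≤ N * (S / k) * m / d := by
        rw [le_div_iff₀ hdpos]
        have h3 : d * ‖α‖ ≤ N * (S / k) := h1.trans (mul_le_mul_of_nonneg_left hMS hN0)
        have := mul_le_mul_of_nonneg_right h3 hm0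
        linarith
      have h4 : S * m = ‖α‖ * m + ‖β‖ * m := by rw [hS]; ring
      have h5 : ‖α‖ * r ≤ S * r := mul_le_mul_of_nonneg_right (by rw [hS]; simp) hr0
      have h6 : 0 ≤ N ^ 2 * (S / k) := by positivity
      linarith
  exact le_of_mul_le_mul_left final hS0

theorem tendsto_integral_cexp {q : ℝ → ℝ} {k : ℕ → ℝ}
    (hk : Filter.Tendsto k Filter.atTop Filter.atTop) :
    Filter.Tendsto (fun n => ‖∫ x, q x * Complex.exp (2 * (Complex.I * k n) * x) ∂unitMeasure‖)
      Filter.atTop (nhds 0) := by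
  have hlim : Filter.Tendsto (fun n => k n / Real.pi) Filter.atTop (Filter.cocompact ℝ) :=
    (hk.atTop_div_const Real.pi_pos).mono_right atTop_le_cocompact
  have hRL := ((Real.tendsto_integral_exp_smul_cocompact
    (indicator (Icc (0:ℝ) 1) fun x => (q x : ℂ))).comp hlim).norm
  rw [norm_zero] at hRL
  refine hRL.congr fun n => ?_
  rw [← norm_integral_cexp_neg, ← integral_indicator measurableSet_Icc]
  simp only [Function.comp_apply]
  congr 2 with x
  by_cases hx : x ∈ Icc (0:ℝ) 1
  · rw [indicator_of_mem hx, indicator_of_mem hx, Circle.smul_def, Real.fourierChar_apply,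
      smul_eq_mul, mul_comm]
    congr 2
    have := Complex.ofReal_ne_zero.mpr Real.pi_ne_zero
    push_cast
    field_simp
  · rw [indicator_of_notMem hx, indicator_of_notMem hx, smul_zero]

theorem exp_I_mul_mul_exp_I_mul (t : ℝ) (n : ℕ) :
    Complex.exp (Complex.I * t) * Complex.exp (Complex.I * (2 * n * Real.pi - t : ℝ)) = 1 := by
  rw [← Complex.exp_add, ← Complex.exp_nat_mul_two_pi_mul_I n]
  congr 1
  push_cast
  ring

theorem integral_eq_zero_of_eigenvalues {q : ℝ → ℝ} (hq : Integrable q unitMeasure) {t : ℝ}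
    (hspec : ∀ n : ℕ, 1 ≤ n → IsQPEigenvalue q t (((2 * n * Real.pi - t) ^ 2 : ℝ) : ℂ)) :
    ∫ x, q x ∂unitMeasure = 0 := by
  have hk : Filter.Tendsto (fun n : ℕ => 2 * n * Real.pi - t) Filter.atTop Filter.atTop := by
    refine Filter.tendsto_atTop_add_const_right _ (-t) ?_
    exact (tendsto_natCast_atTop_atTop.const_mul_atTop two_pos).atTop_mul_const Real.pi_pos
  have hlim := (tendsto_integral_cexp (q := q) hk).add (hk.const_div_atTop
    (4 * (∫ x, |q x| ∂unitMeasure) ^ 2 + (∫ x, |q x| ∂unitMeasure)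
      * |∫ x, q x ∂unitMeasure| / ‖Complex.exp (Complex.I * t) ^ 2 - 1‖))
  rw [add_zero] at hlim
  refine abs_nonpos_iff.mp (ge_of_tendsto hlim ?_)
  filter_upwards [hk.eventually_gt_atTop 0, hk.eventually_ge_atTop (2 * ∫ x, |q x| ∂unitMeasure),
    Filter.eventually_ge_atTop 1] with n hn0 hnN hn1
  exact abs_mean_le hq hn0 hnN (exp_I_mul_mul_exp_I_mul t n) (hspec n hn1)

/-- **Ambarzumyan's theorem for the quasi-periodic problem.**
If every eigenvalue of `L_t(q)` is at least `min (t², (2π−t)²)` and `(2nπ−t)²`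
is an eigenvalue for every `n ≥ 1`, then `q = 0` a.e. on `[0,1]`. -/
theorem ambarzumyan_quasiPeriodic
    (q : ℝ → ℝ) (hq : IntegrableOn q (Icc (0:ℝ) 1))
    (t : ℝ) (ht : t ∈ Ico (0:ℝ) (2 * Real.pi))
    (hlow : ∀ lam : ℂ, IsQPEigenvalue q t lam →
      ∃ r : ℝ, lam = (r : ℂ) ∧ min (t ^ 2) ((2 * Real.pi - t) ^ 2) ≤ r)
    (hspec : ∀ n : ℕ, 1 ≤ n →
      IsQPEigenvalue q t (((2 * n * Real.pi - t) ^ 2 : ℝ) : ℂ)) :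
    ∀ᵐ x ∂(volume.restrict (Icc (0:ℝ) 1)), q x = 0 := by
  have hmean := integral_eq_zero_of_eigenvalues hq hspec
  have hlow' : ∀ l : ℝ, IsQPEigenvalue q t l → min (t ^ 2) ((2 * Real.pi - t) ^ 2) ≤ l := by
    intro l hl
    obtain ⟨r, hr, hle⟩ := hlow l hl
    rwa [Complex.ofReal_injective hr]
  rcases le_total (t ^ 2) ((2 * Real.pi - t) ^ 2) with h | h
  · rw [min_eq_left h] at hlow'
    exact ae_eq_zero_of_eigenvalue_ge hq rfl hmean hlow'
  · rw [min_eq_right h, ← neg_sq, neg_sub] at hlow'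
    refine ae_eq_zero_of_eigenvalue_ge hq ?_ hmean hlow'
    rw [← Complex.exp_periodic.sub_eq (Complex.I * t)]
    congr 1
    push_cast
    ring
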